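/- Let r > 0 be a real number, q ∈ (0,1) and θ ∈ (0,1). For every natural number y, the series ∑_{x=y}^{∞} [C(x,y) θ^y (1-θ)^{x-y}] · [Γ(x+r)/(x! Γ(r)) q^x (1-q)^r] converges and its sum equals Γ(y+r)/(y! Γ(r)) · p̃^y (1-p̃)^r, where p̃ = qθ/(1 - q(1-θ)). In other words, if X has a negative binomial NB(r,q) distribution and Y given X = x has a binomial Bin(x,θ) distribution, then the marginal distribution of Y is NB(r, qθ/(1-q(1-θ))). -/

import Mathlib

/-!
Bayes' rule for the pair `(X, Y)` reads
`P(Y = y, X = y + n) = NB(y; r, p̃) * NB(n; y + r, q(1 - θ))`: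
given `Y = y`, the excess `X - y` is again negative binomial. Summing over `n` leaves
`NB(y; r, p̃)`, because the negative binomial weights sum to `1`. The latter is Newton's binomial
series `∑ n, (s)ₙ / n! * t ^ n = (1 - t) ^ (-s)`, where the rising factorial is
`(s)ₙ = Γ(s + n) / Γ(s)`.
-/

/-- Negative binomial pmf: NB(k; r, p) = Γ(k+r)/(k! Γ(r)) · p^k (1-p)^r. -/
noncomputable def nbPMF (r p : ℝ) (k : ℕ) : ℝ :=
  Real.Gamma ((k : ℝ) + r) / ((k.factorial : ℝ) * Real.Gamma r) * p ^ k * (1 - p) ^ r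

/-- Binomial pmf: Bin(y; n, θ) = C(n,y) θ^y (1-θ)^{n-y} (zero for y > n via `Nat.choose`). -/
noncomputable def binPMF (n : ℕ) (θ : ℝ) (y : ℕ) : ℝ :=
  (n.choose y : ℝ) * θ ^ y * (1 - θ) ^ (n - y)

open Real

theorem Gamma_add_natCast_div_Gamma {s : ℝ} (hs : ∀ m : ℕ, s ≠ -m) (n : ℕ) :
    Gamma (s + n) / Gamma s = (ascPochhammer ℝ n).eval s := by
  have hcast : (((ascPochhammer ℝ n).eval s : ℝ) : ℂ) = (ascPochhammer ℂ n).eval (s : ℂ) := by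
    rw [ascPochhammer_eval₂ Complex.ofRealHom]
    exact (Polynomial.eval₂_at_apply Complex.ofRealHom s).symm
  apply Complex.ofReal_injective
  rw [hcast, ← Complex.Gamma_add_nat_div_Gamma_eq _ (by exact_mod_cast hs)]
  push_cast [← Complex.Gamma_ofReal]
  rfl

theorem multichoose_eq_Gamma_div {s : ℝ} (hs : ∀ m : ℕ, s ≠ -m) (n : ℕ) :
    Ring.multichoose s n = Gamma (n + s) / (n.factorial * Gamma s) := by
  have h := Ring.factorial_nsmul_multichoose_eq_ascPochhammer s n
  rw [Polynomial.ascPochhammer_smeval_eq_eval, nsmul_eq_mul,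
    ← Gamma_add_natCast_div_Gamma hs] at h
  rw [add_comm, mul_comm, ← div_div, ← h, mul_div_cancel_left₀ _ (by positivity)]

theorem hasSum_multichoose_mul_pow (s : ℝ) {t : ℝ} (ht : |t| < 1) :
    HasSum (fun n : ℕ ↦ Ring.multichoose s n * t ^ n) (1 / (1 - t) ^ s) := by
  have h := (one_div_one_sub_rpow_hasFPowerSeriesOnBall_zero s).hasSum (y := t)
    (by simpa [Metric.mem_eball, edist_dist, dist_eq] using ht)
  simpa only [zero_add, FormalMultilinearSeries.ofScalars_apply_eq, smul_eq_mul,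
    ← Ring.multichoose_eq] using h

theorem natCast_add_ne_neg_natCast {s : ℝ} (hs : ∀ m : ℕ, s ≠ -m) (n m : ℕ) :
    n + s ≠ -m := fun h ↦ hs (m + n) (by push_cast; linarith)

theorem hasSum_nbPMF {s t : ℝ} (hs : ∀ m : ℕ, s ≠ -m) (ht : |t| < 1) :
    HasSum (nbPMF s t) 1 := by
  have hpos : 0 < (1 - t) ^ s := rpow_pos_of_pos (by linarith [lt_of_abs_lt ht]) s
  have h := (hasSum_multichoose_mul_pow s ht).mul_right ((1 - t) ^ s)
  rw [one_div_mul_cancel hpos.ne'] at h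
  exact h.congr_fun fun n ↦ by rw [nbPMF, multichoose_eq_Gamma_div hs]

theorem binPMF_eq_zero_of_lt {n y : ℕ} (h : n < y) (θ : ℝ) : binPMF n θ y = 0 := by
  simp [binPMF, Nat.choose_eq_zero_of_lt h]

theorem binPMF_add_left (y n : ℕ) (θ : ℝ) :
    binPMF (y + n) θ y =
      (y + n).factorial / (y.factorial * n.factorial) * θ ^ y * (1 - θ) ^ n := by
  rw [binPMF, Nat.cast_add_choose, Nat.add_sub_cancel_left]

theorem nbPMF_thinned (r : ℝ) {q θ : ℝ} (hq : q ≤ 1) (hqθ : q * (1 - θ) < 1) (y : ℕ) :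
    nbPMF r (q * θ / (1 - q * (1 - θ))) y =
      Gamma (y + r) / (y.factorial * Gamma r) * (q * θ) ^ y * (1 - q) ^ r /
        (1 - q * (1 - θ)) ^ (y + r) := by
  have hd : 0 < 1 - q * (1 - θ) := sub_pos.2 hqθ
  have hp : 1 - q * θ / (1 - q * (1 - θ)) = (1 - q) / (1 - q * (1 - θ)) := by
    rw [one_sub_div hd.ne']
    ring
  rw [nbPMF, hp, div_rpow (sub_nonneg.2 hq) hd.le, div_pow, rpow_add hd, rpow_natCast]
  ring

theorem binPMF_mul_nbPMF_add {r q θ : ℝ} (hr : ∀ m : ℕ, r ≠ -m) (hq : q ≤ 1)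
    (hqθ : q * (1 - θ) < 1) (y n : ℕ) :
    binPMF (y + n) θ y * nbPMF r q (y + n) =
      nbPMF r (q * θ / (1 - q * (1 - θ))) y * nbPMF (y + r) (q * (1 - θ)) n := by
  have hΓ : Gamma (y + r) ≠ 0 := Gamma_ne_zero (natCast_add_ne_neg_natCast hr y)
  have hd : (1 - q * (1 - θ)) ^ (y + r) ≠ 0 := (rpow_pos_of_pos (sub_pos.2 hqθ) _).ne'
  have hadd : ((y + n : ℕ) : ℝ) + r = n + (y + r) := by push_cast; ring
  rw [binPMF_add_left, nbPMF_thinned r hq hqθ, nbPMF, nbPMF, hadd, mul_pow, mul_pow, pow_add]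
  generalize (1 - q * (1 - θ)) ^ (y + r) = d at hd ⊢
  field_simp

theorem negBinomial_binomial_thinning_marginal_general {r q θ : ℝ} (hr : ∀ m : ℕ, r ≠ -m)
    (hq : q < 1) (hqθ : |q * (1 - θ)| < 1) (y : ℕ) :
    HasSum (fun x : ℕ ↦ binPMF x θ y * nbPMF r q x)
      (nbPMF r (q * θ / (1 - q * (1 - θ))) y) := by
  have hvanish : ∀ x ∉ Set.range (y + ·), binPMF x θ y * nbPMF r q x = 0 := fun x hx ↦ by
    rw [binPMF_eq_zero_of_lt, zero_mul]
    by_contra! hyx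
    exact hx ⟨x - y, Nat.add_sub_cancel' hyx⟩
  rw [← (add_right_injective y).hasSum_iff hvanish]
  have h := (hasSum_nbPMF (natCast_add_ne_neg_natCast hr y) hqθ).mul_left
    (nbPMF r (q * θ / (1 - q * (1 - θ))) y)
  rw [mul_one] at h
  exact h.congr_fun fun n ↦ binPMF_mul_nbPMF_add hr hq.le (lt_of_abs_lt hqθ) y n

/-- If X ~ NB(r,q) and Y | X = x ~ Bin(x, θ), then marginally
    Y ~ NB(r, qθ/(1-q(1-θ))).  The series over x (whose terms vanish for x < y
    since C(x,y) = 0) converges to the NB pmf of y at the new success parameter. -/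
theorem negBinomial_binomial_thinning_marginal
    (r q θ : ℝ) (hr : 0 < r) (hq : q ∈ Set.Ioo (0 : ℝ) 1) (hθ : θ ∈ Set.Ioo (0 : ℝ) 1)
    (y : ℕ) :
    HasSum (fun x : ℕ => binPMF x θ y * nbPMF r q x)
      (nbPMF r (q * θ / (1 - q * (1 - θ))) y) := by
  obtain ⟨⟨hq0, hq1⟩, hθ0, hθ1⟩ := And.intro hq hθ
  exact negBinomial_binomial_thinning_marginal_general
    (fun m ↦ by linarith [m.cast_nonneg (α := ℝ)]) hq1 (abs_lt.2 ⟨by nlinarith, by nlinarith⟩) y
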